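/- Let h, g : [0,1] → [0,∞) be lower semicontinuous, let ε > 0 and 0 < δ ≤ ε. Suppose the Hausdorff distance between the epigraphs epi(h) and epi(g) in ℝ² is at most δ. Let s, t ∈ [0,1] be such that |h(s) − g(s)| ≤ δ, |h(t) − g(t)| ≤ δ, and neither s nor t lies in A_δ := {u ∈ [0,1] : inf{h(v) : v ∈ [u−δ, u+δ] ∩ [0,1]} < h(u) − ε}. Then |I_h(s,t) − I_g(s,t)| ≤ 2ε, where I_f(s,t) = inf{f(u) : u ∈ [min(s,t), max(s,t)]}. -/

import Mathlib

open MeasureTheory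

/-- `I_f(s,t) = inf { f(u) : u ∈ [min(s,t), max(s,t)] }`. -/
noncomputable def treeInf (f : unitInterval → ℝ) (s t : unitInterval) : ℝ :=
  sInf (f '' Set.Icc (min s t) (max s t))

/-- The epigraph `epi(f) = {(t, y) ∈ [0,1] × [0,∞) : y ≥ f(t)}` of `f : [0,1] → [0,∞)`,
viewed as a subset of `ℝ²`. -/
def epigraph (f : unitInterval → ℝ) : Set (ℝ × ℝ) :=
  {p | ∃ t : unitInterval, (t : ℝ) = p.1 ∧ 0 ≤ p.2 ∧ f t ≤ p.2}

/-- The infimum of `h` over the window `[u-δ, u+δ] ∩ [0,1]`. -/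
noncomputable def windowInf (h : unitInterval → ℝ) (δ : ℝ) (u : unitInterval) : ℝ :=
  sInf (h '' {v : unitInterval | |(v : ℝ) - (u : ℝ)| ≤ δ})

/-- `A_δ = {u ∈ [0,1] : inf {h(v) : v ∈ [u-δ, u+δ] ∩ [0,1]} < h(u) - ε}`. -/
def badSet (h : unitInterval → ℝ) (ε δ : ℝ) : Set unitInterval :=
  {u | windowInf h δ u < h u - ε}

theorem isClosed_epigraph_aux (f : unitInterval → ℝ) (hf : LowerSemicontinuous f)
    (fnn : ∀ t, 0 ≤ f t) : IsClosed (epigraph f) := by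
  have h1 : IsClosed {p : unitInterval × ℝ | f p.1 ≤ p.2} := hf.isClosed_epigraph
  have h2 : Topology.IsClosedEmbedding
      (Prod.map (Subtype.val : unitInterval → ℝ) (id : ℝ → ℝ)) :=
    (isClosed_Icc.isClosedEmbedding_subtypeVal).prodMap Topology.IsClosedEmbedding.id
  have h3 := h2.isClosedMap _ h1
  convert h3 using 1
  ext ⟨x, y⟩
  constructor
  · rintro ⟨t, h1, h2, h3⟩
    exact ⟨(t, y), h3, Prod.ext h1 rfl⟩
  · rintro ⟨⟨t, z⟩, h3, h4⟩
    simp only [Prod.map, id, Prod.mk.injEq] at h4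
    obtain ⟨h4, rfl⟩ := h4
    exact ⟨t, h4, (fnn t).trans h3, h3⟩

theorem exists_near_aux (f k : unitInterval → ℝ) (hk : LowerSemicontinuous k)
    (fnn : ∀ t, 0 ≤ f t) (knn : ∀ t, 0 ≤ k t) (δ : ℝ) (hδ : 0 < δ)
    (hH : Metric.hausdorffEDist (epigraph f) (epigraph k) ≤ ENNReal.ofReal δ)
    (u : unitInterval) : ∃ v : unitInterval, |(v : ℝ) - u| ≤ δ ∧ k v ≤ f u + δ := by
  have hmem : ((u : ℝ), f u) ∈ epigraph f := ⟨u, rfl, fnn u, le_rfl⟩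
  have hne : (epigraph k).Nonempty := ⟨((u : ℝ), k u), u, rfl, knn u, le_rfl⟩
  obtain ⟨q, ⟨v, hv, _, hq⟩, hd⟩ :=
    (isClosed_epigraph_aux k hk knn).exists_infDist_eq_dist hne ((u : ℝ), f u)
  have h1 : Metric.infDist ((u : ℝ), f u) (epigraph k) ≤ δ := by
    have h2 := (Metric.infEDist_le_hausdorffEDist_of_mem (t := epigraph k) hmem).trans hH
    exact ENNReal.toReal_le_of_le_ofReal hδ.le h2
  rw [hd, Prod.dist_eq, max_le_iff, Real.dist_eq, Real.dist_eq, ← hv] at h1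
  refine ⟨v, by rw [abs_sub_comm]; exact h1.1, ?_⟩
  have := abs_le.1 h1.2
  simp only at this
  linarith [this.1]

theorem treeInf_le_aux (f : unitInterval → ℝ) (fnn : ∀ t, 0 ≤ f t) (s t u : unitInterval)
    (hu : u ∈ Set.Icc (min s t) (max s t)) : treeInf f s t ≤ f u :=
  csInf_le ⟨0, by rintro _ ⟨x, _, rfl⟩; exact fnn x⟩ ⟨u, hu, rfl⟩

theorem le_treeInf_aux (f : unitInterval → ℝ) (s t : unitInterval) (c : ℝ)
    (hc : ∀ u ∈ Set.Icc (min s t) (max s t), c ≤ f u) : c ≤ treeInf f s t := by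
  refine le_csInf ⟨f s, s, ⟨min_le_left _ _, le_max_left _ _⟩, rfl⟩ ?_
  rintro _ ⟨x, hx, rfl⟩
  exact hc x hx

theorem good_aux (h : unitInterval → ℝ) (hnn : ∀ t, 0 ≤ h t) (ε δ : ℝ) (s v : unitInterval)
    (hs : s ∉ badSet h ε δ) (hv : |(v : ℝ) - s| ≤ δ) : h s - ε ≤ h v := by
  have h1 : h s - ε ≤ windowInf h δ s := not_lt.1 hs
  exact h1.trans (csInf_le ⟨0, by rintro _ ⟨x, _, rfl⟩; exact hnn x⟩ ⟨v, hv, rfl⟩)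

/-- If `u` is between `s` and `t` and `v` is `δ`-close to `u`, either `v` is between, or an endpoint
is `δ`-close to both. -/
theorem position_aux (s t u v : unitInterval) (δ : ℝ)
    (hu : u ∈ Set.Icc (min s t) (max s t)) (hv : |(v : ℝ) - u| ≤ δ) :
    v ∈ Set.Icc (min s t) (max s t) ∨ ∃ w, (w = s ∨ w = t) ∧
      |(u : ℝ) - w| ≤ δ ∧ |(v : ℝ) - w| ≤ δ := by
  have hb := abs_le.1 hv
  by_cases h1 : min s t ≤ v
  · by_cases h2 : v ≤ max s t
    · exact Or.inl ⟨h1, h2⟩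
    · right
      refine ⟨max s t, max_choice s t, ?_⟩
      have h3 : ((max s t : unitInterval) : ℝ) < v := not_le.1 h2
      have h4 : (u : ℝ) ≤ (max s t : unitInterval) := hu.2
      constructor <;> rw [abs_le] <;> constructor <;> linarith [hb.1, hb.2]
  · right
    refine ⟨min s t, min_choice s t, ?_⟩
    have h3 : (v : ℝ) < (min s t : unitInterval) := not_le.1 h1
    have h4 : ((min s t : unitInterval) : ℝ) ≤ u := hu.1
    constructor <;> rw [abs_le] <;> constructor <;> linarith [hb.1, hb.2]

/-- Let `h, g` be lower semicontinuous `[0,1] → [0,∞)`, `0 < δ ≤ ε`,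
with Hausdorff distance between the epigraphs at most `δ`. If `|h - g| ≤ δ` at `s` and `t`
and neither `s` nor `t` lies in `A_δ`, then `|I_h(s,t) - I_g(s,t)| ≤ 2ε`. -/
theorem abs_treeInf_sub_treeInf_le
    (h g : unitInterval → ℝ)
    (hlsc : LowerSemicontinuous h) (glsc : LowerSemicontinuous g)
    (hnn : ∀ t, 0 ≤ h t) (gnn : ∀ t, 0 ≤ g t)
    (ε δ : ℝ) (hε : 0 < ε) (hδ : 0 < δ) (hδε : δ ≤ ε)
    (hH : EMetric.hausdorffEdist (epigraph h) (epigraph g) ≤ ENNReal.ofReal δ)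
    (s t : unitInterval)
    (hs : |h s - g s| ≤ δ) (ht : |h t - g t| ≤ δ)
    (hsA : s ∉ badSet h ε δ) (htA : t ∉ badSet h ε δ) :
    |treeInf h s t - treeInf g s t| ≤ 2 * ε := by
  have hw : ∀ w, (w = s ∨ w = t) → |h w - g w| ≤ δ ∧ w ∉ badSet h ε δ ∧
      w ∈ Set.Icc (min s t) (max s t) := by
    rintro w (rfl | rfl)
    · exact ⟨hs, hsA, min_le_left _ _, le_max_left _ _⟩
    · exact ⟨ht, htA, min_le_right _ _, le_max_right _ _⟩
  have A : treeInf g s t - 2 * ε ≤ treeInf h s t := by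
    refine le_treeInf_aux _ _ _ _ fun u hu => ?_
    obtain ⟨v, hv, hgv⟩ := exists_near_aux h g glsc hnn gnn δ hδ hH u
    rcases position_aux s t u v δ hu hv with hin | ⟨w, hwst, huw, -⟩
    · linarith [treeInf_le_aux g gnn s t v hin]
    · obtain ⟨h1, h2, h3⟩ := hw w hwst
      linarith [treeInf_le_aux g gnn s t w h3, good_aux h hnn ε δ w u h2 huw, (abs_le.1 h1).1]
  have B : treeInf h s t - 2 * ε ≤ treeInf g s t := by
    refine le_treeInf_aux _ _ _ _ fun u hu => ?_
    obtain ⟨v, hv, hgv⟩ := exists_near_aux g h hlsc gnn hnn δ hδ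
      (by rw [Metric.hausdorffEDist_comm]; exact hH) u
    rcases position_aux s t u v δ hu hv with hin | ⟨w, hwst, -, hvw⟩
    · linarith [treeInf_le_aux h hnn s t v hin]
    · obtain ⟨h1, h2, h3⟩ := hw w hwst
      linarith [treeInf_le_aux h hnn s t w h3, good_aux h hnn ε δ w v h2 hvw]
  rw [abs_le]
  constructor <;> linarith
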